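/- arXiv:2405.17014 — 3 statements merged into one kernel-verified Lean document; each statement's English description precedes it below -/
import Mathlib

section
/- Let 0 < g_* ≤ g^* and 0 < γ_* ≤ γ^*, and let g : (0,∞) → (0,∞) be differentiable with g_* ≤ 1 + r g′(r)/g(r) ≤ g^* and γ_* ≤ g(r) ≤ γ^* for all r > 0, and define h : ℝ → ℝ by h(t) = g(|t|) t for t ≠ 0 and h(0) = 0. Then for all ξ, ζ ∈ ℝ one has |h(ξ) − h(ζ)| ≤ γ^* g^* |ξ − ζ|. -/
/-!
Off the origin, `h` is differentiable with `h'(t) = g(r) + r g'(r) = g(r) (1 + r g'(r) / g(r))`,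
where `r = |t|`, so the bounds on the two factors give `|h'| ≤ γ^* g^*`. Boundedness of `g` makes
`h` continuous at `0`, hence the mean value inequalities on the two open half-lines extend to their
closures and glue at the origin.
-/

open Set
open scoped NNReal

theorem lipschitzWith_of_lipschitzOnWith_Iic_Ici {α : Type*} [PseudoMetricSpace α] {f : ℝ → α}
    {K : ℝ≥0} {c : ℝ} (hl : LipschitzOnWith K f (Iic c)) (hr : LipschitzOnWith K f (Ici c)) :
    LipschitzWith K f := by
  refine LipschitzWith.of_dist_le_mul fun x y => ?_
  wlog hxy : x ≤ y generalizing x y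
  · simpa only [dist_comm] using this y x (le_of_not_ge hxy)
  rcases le_total y c with hyc | hcy
  · exact hl.dist_le_mul x (hxy.trans hyc) y hyc
  rcases le_total c x with hcx | hxc
  · exact hr.dist_le_mul x hcx y hcy
  have hsplit : dist x c + dist c y = dist x y :=
    dist_add_dist_of_mem_segment (by rw [segment_eq_Icc hxy]; exact ⟨hxc, hcy⟩)
  calc
    dist (f x) (f y) ≤ dist (f x) (f c) + dist (f c) (f y) := dist_triangle _ _ _
    _ ≤ K * dist x c + K * dist c y :=
      add_le_add (hl.dist_le_mul x hxc c self_mem_Iic) (hr.dist_le_mul c self_mem_Ici y hcy)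
    _ = K * dist x y := by rw [← mul_add, hsplit]

theorem lipschitzWith_of_nnnorm_hasDerivAt_le_of_ne {E : Type*} [NormedAddCommGroup E]
    [NormedSpace ℝ E] {f f' : ℝ → E} {c : ℝ} {C : ℝ≥0} (hc : ContinuousAt f c)
    (hf : ∀ x ≠ c, HasDerivAt f (f' x) x) (bound : ∀ x ≠ c, ‖f' x‖₊ ≤ C) :
    LipschitzWith C f := by
  have hcont : Continuous f := continuous_iff_continuousAt.2 fun x => by
    rcases eq_or_ne x c with rfl | hx
    exacts [hc, (hf x hx).continuousAt]
  have lipschitz_closure {s : Set ℝ} (hs : Convex ℝ s) (hne : ∀ x ∈ s, x ≠ c) :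
      LipschitzOnWith C f (closure s) :=
    (hs.lipschitzOnWith_of_nnnorm_hasDerivWithin_le
      (fun x hx => (hf x (hne x hx)).hasDerivWithinAt)
      fun x hx => bound x (hne x hx)).closure hcont.continuousOn
  apply lipschitzWith_of_lipschitzOnWith_Iic_Ici (c := c)
  · simpa only [closure_Iio] using lipschitz_closure (convex_Iio c) fun _ hx => ne_of_lt hx
  · simpa only [closure_Ioi] using lipschitz_closure (convex_Ioi c) fun _ hx => ne_of_gt hx

theorem hasDerivAt_comp_abs_mul_self {g : ℝ → ℝ} {d t : ℝ} (hg : HasDerivAt g d |t|)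
    (ht : t ≠ 0) : HasDerivAt (fun x => g |x| * x) (g |t| + |t| * d) t := by
  have hprod := (hg.comp t (hasDerivAt_abs ht)).mul (hasDerivAt_id t)
  refine hprod.congr_deriv ?_
  simp only [Function.comp_apply, id_eq, mul_one]
  linear_combination d * sign_mul_self t

theorem continuousAt_zero_comp_abs_mul_self {g : ℝ → ℝ} {M : ℝ}
    (hg : ∀ r, 0 < r → |g r| ≤ M) : ContinuousAt (fun x => g |x| * x) 0 := by
  have hbound (x : ℝ) : ‖g |x| * x‖ ≤ M * |x| := by
    rcases eq_or_ne x 0 with rfl | hx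
    · simp
    · rw [Real.norm_eq_abs, abs_mul]
      exact mul_le_mul_of_nonneg_right (hg |x| (abs_pos.2 hx)) (abs_nonneg x)
  have hlim : Filter.Tendsto (fun x : ℝ => M * |x|) (nhds 0) (nhds 0) :=
    Continuous.tendsto' (by fun_prop) 0 0 (by simp)
  simpa only [ContinuousAt, mul_zero] using squeeze_zero_norm hbound hlim

theorem abs_add_mul_le_of_abs_one_add_mul_div_le {a d r M S : ℝ} (ha : a ≠ 0) (haM : |a| ≤ M)
    (hS : |1 + r * d / a| ≤ S) : |a + r * d| ≤ M * S :=
  calc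
    |a + r * d| = |a| * |1 + r * d / a| := by rw [← abs_mul, mul_add, mul_one, mul_div_cancel₀ _ ha]
    _ ≤ M * S := mul_le_mul haM hS (abs_nonneg _) ((abs_nonneg a).trans haM)

theorem h_lipschitz_general {gS γS : ℝ} {g g' h : ℝ → ℝ}
    (hgderiv : ∀ r, 0 < r → HasDerivAt g (g' r) r) (hg0 : ∀ r, 0 < r → g r ≠ 0)
    (hbdd : ∀ r, 0 < r → |g r| ≤ γS) (hgrowth : ∀ r, 0 < r → |1 + r * g' r / g r| ≤ gS)
    (hh : ∀ t, t ≠ 0 → h t = g |t| * t) (hh0 : h 0 = 0) (ξ ζ : ℝ) :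
    |h ξ - h ζ| ≤ γS * gS * |ξ - ζ| := by
  obtain rfl : h = fun t => g |t| * t := by
    funext t
    rcases eq_or_ne t 0 with rfl | ht
    exacts [hh0.trans (mul_zero _).symm, hh t ht]
  have hderiv_le (t : ℝ) (ht : t ≠ 0) : |(g |t| + |t| * g' |t|)| ≤ γS * gS :=
    have hr := abs_pos.2 ht
    abs_add_mul_le_of_abs_one_add_mul_div_le (hg0 _ hr) (hbdd _ hr) (hgrowth _ hr)
  have hC : 0 ≤ γS * gS := (abs_nonneg _).trans (hderiv_le 1 one_ne_zero)
  have hLip : LipschitzWith ⟨γS * gS, hC⟩ fun t => g |t| * t :=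
    lipschitzWith_of_nnnorm_hasDerivAt_le_of_ne (continuousAt_zero_comp_abs_mul_self hbdd)
      (fun t ht => hasDerivAt_comp_abs_mul_self (hgderiv _ (abs_pos.2 ht)) ht) hderiv_le
  exact hLip.dist_le_mul ξ ζ

/-- In the Hilbertian case `0 < γ_* ≤ g(r) ≤ γ^*`, the function `h(t) = g(|t|) t`
(extended by `h(0) = 0`) satisfies the pointwise Lipschitz bound
`|h(ξ) - h(ζ)| ≤ γ^* g^* |ξ - ζ|` for all `ξ, ζ ∈ ℝ`. -/
theorem h_lipschitz (gs gS γs γS : ℝ) (hgs : 0 < gs) (hgsS : gs ≤ gS)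
    (hγs : 0 < γs) (hγsS : γs ≤ γS)
    (g g' : ℝ → ℝ)
    (hgderiv : ∀ r : ℝ, 0 < r → HasDerivAt g (g' r) r)
    (hlow : ∀ r : ℝ, 0 < r → gs ≤ 1 + r * g' r / g r)
    (hupp : ∀ r : ℝ, 0 < r → 1 + r * g' r / g r ≤ gS)
    (hbdd : ∀ r : ℝ, 0 < r → γs ≤ g r ∧ g r ≤ γS)
    (h : ℝ → ℝ) (hh : ∀ t : ℝ, t ≠ 0 → h t = g |t| * t) (hh0 : h 0 = 0) :
    ∀ ξ ζ : ℝ, |h ξ - h ζ| ≤ γS * gS * |ξ - ζ| := by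
  have hpos (r : ℝ) (hr : 0 < r) : 0 < g r := hγs.trans_le (hbdd r hr).1
  exact h_lipschitz_general hgderiv (fun r hr => (hpos r hr).ne')
    (fun r hr => (abs_of_pos (hpos r hr)).trans_le (hbdd r hr).2)
    (fun r hr => (abs_of_pos (hgs.trans_le (hlow r hr))).trans_le (hupp r hr)) hh hh0
end

section
/- Let d ≥ 1, 0 < s < 1, 0 < g_* ≤ g^*, 0 < γ_* ≤ γ^*, and let g : ℝ^d × ℝ^d × (0,∞) → (0,∞) be jointly measurable such that for almost every (x,y) the map r ↦ g(x,y,r) is differentiable with g_* ≤ 1 + r ∂_r g(x,y,r)/g(x,y,r) ≤ g^* and γ_* ≤ g(x,y,r) ≤ γ^* for all r > 0; set h(x,y,t) = g(x,y,|t|) t for t ≠ 0 and h(x,y,0) = 0. Let u, v, w : ℝ^d → ℝ be measurable with finite Gagliardo H^s seminorms [u − v]_{s,2} < ∞ and [w]_{s,2} < ∞. Then the function (x,y) ↦ [ h(x,y, δ^s u) − h(x,y, δ^s v) ] · δ^s w · |x−y|^{−d} is integrable on ℝ^d × ℝ^d and | ∫_{ℝ^d}∫_{ℝ^d} [ h(x,y,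 δ^s u) − h(x,y, δ^s v) ] δ^s w |x−y|^{−d} dx dy | ≤ γ^* g^* [u − v]_{s,2} [w]_{s,2}. -/
open MeasureTheory

/-- Euclidean space `ℝ^d`. -/
abbrev Ed (d : ℕ) : Type := EuclideanSpace ℝ (Fin d)

/-- The fractional difference quotient `δ^s u(x,y) = (u(x) - u(y))/|x-y|^s`. -/
noncomputable def deltaS {d : ℕ} (s : ℝ) (u : Ed d → ℝ) (x y : Ed d) : ℝ :=
  (u x - u y) / ‖x - y‖ ^ s

/-- The square of the Gagliardo `H^s` seminorm, as a value in `[0,∞]`. -/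
noncomputable def gagliardoSq (d : ℕ) (s : ℝ) (w : Ed d → ℝ) : ENNReal :=
  ∫⁻ p : Ed d × Ed d, ENNReal.ofReal (|w p.1 - w p.2| ^ 2 / ‖p.1 - p.2‖ ^ ((d : ℝ) + 2 * s))

/-!
The flux `h(x,y,t) = g(x,y,|t|) t` is odd in `t`, and on `t > 0` its derivative
`g + r ∂_r g = g (1 + r ∂_r g / g)` is bounded by `γ^* g^*`; since `h(x,y,t) → 0` as `t → 0`,
it is `γ^* g^*`-Lipschitz on the whole line. Moreover the square of `δ^{s + d/2} w` is exactly the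
Gagliardo density of `w`, and `δ^s a · δ^s b / |x-y|^d = δ^{s + d/2} a · δ^{s + d/2} b`. The
integrand is therefore dominated by `γ^* g^* |δ^{s + d/2} (u - v)| |δ^{s + d/2} w|`, and the
Cauchy–Schwarz inequality concludes.
-/

open Set
open scoped ENNReal NNReal Topology

section LipschitzOddExtension

variable {E : Type*} {K : ℝ≥0}

lemma lipschitzWith_of_lipschitzOnWith_Iic_Ici_s15 [PseudoMetricSpace E] {φ : ℝ → E} {c : ℝ}
    (hIic : LipschitzOnWith K φ (Iic c)) (hIci : LipschitzOnWith K φ (Ici c)) :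
    LipschitzWith K φ := by
  refine LipschitzWith.of_dist_le_mul fun a b ↦ ?_
  wlog hab : a ≤ b generalizing a b
  · simpa only [dist_comm] using this b a (le_of_not_ge hab)
  rcases le_total b c with hbc | hcb
  · exact hIic.dist_le_mul a (hab.trans hbc) b hbc
  rcases le_total c a with hca | hac
  · exact hIci.dist_le_mul a hca b hcb
  calc dist (φ a) (φ b)
      ≤ dist (φ a) (φ c) + dist (φ c) (φ b) := dist_triangle ..
    _ ≤ K * dist a c + K * dist c b :=
        add_le_add (hIic.dist_le_mul a hac c self_mem_Iic)
          (hIci.dist_le_mul c self_mem_Ici b hcb)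
    _ = K * dist a b := by
        simp only [Real.dist_eq, abs_of_nonpos (sub_nonpos.2 hac),
          abs_of_nonpos (sub_nonpos.2 hcb), abs_of_nonpos (sub_nonpos.2 hab)]
        ring

lemma lipschitzWith_of_odd_of_lipschitzOnWith_Ici [SeminormedAddCommGroup E] {φ : ℝ → E}
    (hodd : Function.Odd φ) (hφ : LipschitzOnWith K φ (Ici 0)) : LipschitzWith K φ := by
  refine lipschitzWith_of_lipschitzOnWith_Iic_Ici_s15 (.of_dist_le_mul fun a ha b hb ↦ ?_) hφ
  simpa only [hodd a, hodd b, dist_neg_neg] using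
    hφ.dist_le_mul (-a) (mem_Ici.2 (neg_nonneg.2 ha)) (-b) (mem_Ici.2 (neg_nonneg.2 hb))

lemma lipschitzOnWith_Ici_of_norm_hasDerivAt_le [NormedAddCommGroup E] [NormedSpace ℝ E]
    {φ φ' : ℝ → E} {c : ℝ} (hcont : ContinuousWithinAt φ (Ici c) c)
    (hderiv : ∀ r, c < r → HasDerivAt φ (φ' r) r) (hbound : ∀ r, c < r → ‖φ' r‖ ≤ K) :
    LipschitzOnWith K φ (Ici c) := by
  have hIoi : LipschitzOnWith K φ (Ioi c) :=
    (convex_Ioi c).lipschitzOnWith_of_nnnorm_hasDerivWithin_le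
      (fun r hr ↦ (hderiv r hr).hasDerivWithinAt) hbound
  have hcontOn : ContinuousOn φ (Ici c) := fun r hr ↦ by
    rcases (mem_Ici.1 hr).eq_or_lt with rfl | hr
    · exact hcont
    · exact (hderiv r hr).continuousAt.continuousWithinAt
  rw [← closure_Ioi c] at hcontOn ⊢
  exact (lipschitzOnWith_closure_iff hcontOn).2 hIoi

end LipschitzOddExtension

section Flux

variable {f : ℝ → ℝ}

lemma continuousAt_comp_abs_mul_zero {Γ : ℝ} (hf : ∀ r, 0 < r → |f r| ≤ Γ) :
    ContinuousAt (fun t ↦ f |t| * t) 0 := by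
  have hle (t : ℝ) : ‖f |t| * t‖ ≤ Γ * |t| := by
    rcases eq_or_ne t 0 with rfl | ht
    · simp
    · rw [norm_mul]
      exact mul_le_mul_of_nonneg_right (hf |t| (abs_pos.2 ht)) (abs_nonneg t)
  have hlim : Filter.Tendsto (fun t : ℝ ↦ Γ * |t|) (𝓝 0) (𝓝 0) :=
    Continuous.tendsto' (by fun_prop) _ _ (by simp)
  simpa only [ContinuousAt, mul_zero] using squeeze_zero_norm hle hlim

lemma hasDerivAt_comp_abs_mul {a r : ℝ} (hr : 0 < r) (hf : HasDerivAt f a r) :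
    HasDerivAt (fun t ↦ f |t| * t) (a * r + f r) r := by
  have hmul : HasDerivAt (fun t ↦ f t * t) (a * r + f r) r := by
    simpa only [id, mul_one] using! hf.mul (hasDerivAt_id r)
  refine hmul.congr_of_eventuallyEq ?_
  filter_upwards [lt_mem_nhds hr] with t ht
  rw [abs_of_pos ht]

lemma abs_mul_add_le_of_abs_one_add_mul_div_le {a r y Γ G : ℝ} (hpos : 0 < y) (hle : y ≤ Γ)
    (hgrowth : |1 + r * a / y| ≤ G) : |a * r + y| ≤ Γ * G := by
  have hfactor : a * r + y = y * (1 + r * a / y) := by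
    field_simp
    ring
  rw [hfactor, abs_mul, abs_of_pos hpos]
  exact mul_le_mul hle hgrowth (abs_nonneg _) (hpos.le.trans hle)

theorem lipschitzWith_comp_abs_mul {f' : ℝ → ℝ} {G Γ : ℝ≥0}
    (hf : ∀ r, 0 < r →
      HasDerivAt f (f' r) r ∧ |1 + r * f' r / f r| ≤ G ∧ 0 < f r ∧ f r ≤ Γ) :
    LipschitzWith (Γ * G) fun t ↦ f |t| * t := by
  refine lipschitzWith_of_odd_of_lipschitzOnWith_Ici (fun t ↦ by simp only [abs_neg, mul_neg])
    (lipschitzOnWith_Ici_of_norm_hasDerivAt_le (φ' := fun r ↦ f' r * r + f r) ?_ ?_ ?_)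
  · refine (continuousAt_comp_abs_mul_zero (Γ := Γ) fun r hr ↦ ?_).continuousWithinAt
    obtain ⟨-, -, hpos, hle⟩ := hf r hr
    rwa [abs_of_pos hpos]
  · exact fun r hr ↦ hasDerivAt_comp_abs_mul hr (hf r hr).1
  · intro r hr
    obtain ⟨-, hgrowth, hpos, hle⟩ := hf r hr
    exact abs_mul_add_le_of_abs_one_add_mul_div_le hpos hle hgrowth

end Flux

lemma eLpNorm_le_mul_eLpNorm_mul_eLpNorm_of_norm_le {α E F G : Type*} [MeasurableSpace α]
    {μ : Measure α} [NormedAddCommGroup E] [NormedAddCommGroup F] [NormedAddCommGroup G]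
    {p q r : ℝ≥0∞} [ENNReal.HolderTriple p q r] {a : α → E} {b : α → F} {φ : α → G} {K : ℝ≥0}
    (ha : AEStronglyMeasurable a μ) (hb : AEStronglyMeasurable b μ)
    (hφ : ∀ᵐ x ∂μ, ‖φ x‖ ≤ K * ‖a x‖ * ‖b x‖) :
    eLpNorm φ r μ ≤ K * eLpNorm a p μ * eLpNorm b q μ :=
  (eLpNorm_mono_ae_real hφ).trans <|
    eLpNorm_le_eLpNorm_mul_eLpNorm'_of_norm ha hb (fun y z ↦ K * ‖y‖ * ‖z‖) K
      (.of_forall fun x ↦ by simp)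

section DifferenceQuotient

variable {d : ℕ} {s t : ℝ} {u v w : Ed d → ℝ}

lemma deltaS_sub (x y : Ed d) :
    deltaS s (fun z ↦ u z - v z) x y = deltaS s u x y - deltaS s v x y := by
  simp only [deltaS]
  ring

lemma deltaS_add_exponent (x y : Ed d) :
    deltaS (s + t) u x y = deltaS s u x y / ‖x - y‖ ^ t := by
  rcases eq_or_ne x y with rfl | hxy
  · simp [deltaS]
  · rw [deltaS, deltaS, Real.rpow_add (norm_sub_pos_iff.2 hxy), div_div]

lemma deltaS_mul_deltaS_add_half_exponent (x y : Ed d) :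
    deltaS (s + t / 2) u x y * deltaS (s + t / 2) w x y =
      deltaS s u x y * deltaS s w x y / ‖x - y‖ ^ t := by
  rcases eq_or_ne x y with rfl | hxy
  · simp [deltaS]
  · rw [deltaS_add_exponent, deltaS_add_exponent, div_mul_div_comm,
      ← Real.rpow_add (norm_sub_pos_iff.2 hxy), add_halves]

lemma deltaS_sq (x y : Ed d) :
    deltaS s u x y ^ 2 = |u x - u y| ^ 2 / ‖x - y‖ ^ (2 * s) := by
  rw [deltaS, div_pow, sq_abs, mul_comm, Real.rpow_mul (norm_nonneg _), Real.rpow_two]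

lemma aemeasurable_deltaS (hu : AEMeasurable u) :
    AEMeasurable fun p : Ed d × Ed d ↦ deltaS s u p.1 p.2 :=
  (hu.comp_fst.sub hu.comp_snd).div (by fun_prop)

lemma eLpNorm_deltaS_add_half_dim :
    eLpNorm (fun p : Ed d × Ed d ↦ deltaS (s + d / 2) w p.1 p.2) 2 volume =
      gagliardoSq d s w ^ ((1 : ℝ) / 2) := by
  have hdensity (p : Ed d × Ed d) : ‖deltaS (s + d / 2) w p.1 p.2‖ₑ ^ (2 : ℝ) =
      ENNReal.ofReal (|w p.1 - w p.2| ^ 2 / ‖p.1 - p.2‖ ^ ((d : ℝ) + 2 * s)) := by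
    rw [ENNReal.rpow_two, Real.enorm_eq_ofReal_abs, ← ENNReal.ofReal_pow (abs_nonneg _), sq_abs,
      deltaS_sq]
    ring_nf
  simp only [eLpNorm_eq_lintegral_rpow_enorm_toReal two_ne_zero ENNReal.ofNat_ne_top,
    ENNReal.toReal_ofNat, hdensity, gagliardoSq]

end DifferenceQuotient

section Pairing

variable {d : ℕ} {s : ℝ} {h : Ed d → Ed d → ℝ → ℝ} {u v w : Ed d → ℝ} {K : ℝ≥0}

/-- The integrand of the pairing `⟨𝓛^s u - 𝓛^s v, w⟩`, as a function on `ℝ^d × ℝ^d`, for the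
nonlocal operator `𝓛^s` with an arbitrary flux `h(x,y,t)`; the nonlocal `g`-Laplacian has the flux
`h(x,y,t) = g(x,y,|t|) t`. -/
noncomputable def pairingIntegrand (h : Ed d → Ed d → ℝ → ℝ) (s : ℝ) (u v w : Ed d → ℝ)
    (p : Ed d × Ed d) : ℝ :=
  (h p.1 p.2 (deltaS s u p.1 p.2) - h p.1 p.2 (deltaS s v p.1 p.2)) *
    deltaS s w p.1 p.2 / ‖p.1 - p.2‖ ^ (d : ℝ)

lemma aemeasurable_pairingIntegrand
    (hh : Measurable fun p : Ed d × Ed d × ℝ ↦ h p.1 p.2.1 p.2.2)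
    (hu : AEMeasurable u) (hv : AEMeasurable v) (hw : AEMeasurable w) :
    AEMeasurable (pairingIntegrand h s u v w) := by
  have hflux {f : Ed d → ℝ} (hf : AEMeasurable f) :
      AEMeasurable fun p : Ed d × Ed d ↦ h p.1 p.2 (deltaS s f p.1 p.2) :=
    hh.comp_aemeasurable
      (measurable_fst.aemeasurable.prodMk
        (measurable_snd.aemeasurable.prodMk (aemeasurable_deltaS hf)))
  exact (((hflux hu).sub (hflux hv)).mul (aemeasurable_deltaS hw)).div (by fun_prop)

lemma norm_pairingIntegrand_le {p : Ed d × Ed d} (hh : LipschitzWith K (h p.1 p.2)) :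
    ‖pairingIntegrand h s u v w p‖ ≤
      K * ‖deltaS (s + d / 2) (fun z ↦ u z - v z) p.1 p.2‖ * ‖deltaS (s + d / 2) w p.1 p.2‖ := by
  have hlip : ‖h p.1 p.2 (deltaS s u p.1 p.2) - h p.1 p.2 (deltaS s v p.1 p.2)‖ ≤
      K * ‖deltaS s (fun z ↦ u z - v z) p.1 p.2‖ := by
    simpa only [dist_eq_norm, deltaS_sub] using
      hh.dist_le_mul (deltaS s u p.1 p.2) (deltaS s v p.1 p.2)
  calc ‖pairingIntegrand h s u v w p‖
      ≤ K * ‖deltaS s (fun z ↦ u z - v z) p.1 p.2‖ * ‖deltaS s w p.1 p.2‖ /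
          ‖‖p.1 - p.2‖ ^ (d : ℝ)‖ := by
        rw [pairingIntegrand, norm_div, norm_mul]
        gcongr
    _ = K * ‖deltaS (s + d / 2) (fun z ↦ u z - v z) p.1 p.2‖ *
          ‖deltaS (s + d / 2) w p.1 p.2‖ := by
        rw [mul_assoc, mul_assoc, ← norm_mul, ← norm_mul, deltaS_mul_deltaS_add_half_exponent,
          norm_div, mul_div_assoc]

theorem eLpNorm_one_pairingIntegrand_le
    (hh : ∀ᵐ p : Ed d × Ed d, LipschitzWith K (h p.1 p.2))
    (huv : AEMeasurable fun z ↦ u z - v z) (hw : AEMeasurable w) :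
    eLpNorm (pairingIntegrand h s u v w) 1 volume ≤
      K * gagliardoSq d s (fun z ↦ u z - v z) ^ ((1 : ℝ) / 2) *
        gagliardoSq d s w ^ ((1 : ℝ) / 2) := by
  simp only [← eLpNorm_deltaS_add_half_dim]
  exact eLpNorm_le_mul_eLpNorm_mul_eLpNorm_of_norm_le
    (aemeasurable_deltaS huv).aestronglyMeasurable (aemeasurable_deltaS hw).aestronglyMeasurable
    (hh.mono fun _ hp ↦ norm_pairingIntegrand_le hp)

theorem integrable_pairingIntegrand_and_abs_integral_le
    (hmeas : Measurable fun p : Ed d × Ed d × ℝ ↦ h p.1 p.2.1 p.2.2)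
    (hlip : ∀ᵐ p : Ed d × Ed d, LipschitzWith K (h p.1 p.2))
    (hu : AEMeasurable u) (hv : AEMeasurable v) (hw : AEMeasurable w)
    (hfin_sub : gagliardoSq d s (fun z ↦ u z - v z) ≠ ⊤) (hfin : gagliardoSq d s w ≠ ⊤) :
    Integrable (pairingIntegrand h s u v w) volume ∧
    |∫ p, pairingIntegrand h s u v w p| ≤
      K * (gagliardoSq d s (fun z ↦ u z - v z)).toReal ^ ((1 : ℝ) / 2) *
        (gagliardoSq d s w).toReal ^ ((1 : ℝ) / 2) := by
  have hbound := eLpNorm_one_pairingIntegrand_le (s := s) hlip (hu.sub hv) hw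
  have hbound_ne_top : K * gagliardoSq d s (fun z ↦ u z - v z) ^ ((1 : ℝ) / 2) *
      gagliardoSq d s w ^ ((1 : ℝ) / 2) ≠ ⊤ := by finiteness
  refine ⟨memLp_one_iff_integrable.1
    ⟨(aemeasurable_pairingIntegrand hmeas hu hv hw).aestronglyMeasurable,
      hbound.trans_lt hbound_ne_top.lt_top⟩, ?_⟩
  rw [← Real.norm_eq_abs, ← toReal_enorm]
  simpa only [ENNReal.toReal_mul, ENNReal.coe_toReal, ENNReal.toReal_rpow] using
    ENNReal.toReal_mono hbound_ne_top <|
      (enorm_integral_le_lintegral_enorm _).trans (eLpNorm_one_eq_lintegral_enorm.ge.trans hbound)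

end Pairing

theorem lipschitz_hilbertian_general {d : ℕ} {s : ℝ} {gS γS : ℝ≥0} {g g' : Ed d → Ed d → ℝ → ℝ}
    (hgmeas : Measurable (fun p : Ed d × Ed d × ℝ => g p.1 p.2.1 p.2.2))
    (hgae : ∀ᵐ p : Ed d × Ed d, ∀ r : ℝ, 0 < r →
      HasDerivAt (g p.1 p.2) (g' p.1 p.2 r) r ∧
      |1 + r * g' p.1 p.2 r / g p.1 p.2 r| ≤ gS ∧
      0 < g p.1 p.2 r ∧ g p.1 p.2 r ≤ γS)
    {h : Ed d → Ed d → ℝ → ℝ}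
    (hh : ∀ (x y : Ed d) (t : ℝ), t ≠ 0 → h x y t = g x y |t| * t)
    (hh0 : ∀ x y : Ed d, h x y 0 = 0)
    {u v w : Ed d → ℝ} (hu : AEMeasurable u) (hv : AEMeasurable v) (hw : AEMeasurable w)
    (hfin1 : gagliardoSq d s (fun z => u z - v z) ≠ ⊤)
    (hfin2 : gagliardoSq d s w ≠ ⊤) :
    Integrable (fun p : Ed d × Ed d =>
      (h p.1 p.2 (deltaS s u p.1 p.2) - h p.1 p.2 (deltaS s v p.1 p.2)) *
        deltaS s w p.1 p.2 / ‖p.1 - p.2‖ ^ (d : ℝ)) volume ∧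
    |∫ p : Ed d × Ed d,
        (h p.1 p.2 (deltaS s u p.1 p.2) - h p.1 p.2 (deltaS s v p.1 p.2)) *
          deltaS s w p.1 p.2 / ‖p.1 - p.2‖ ^ (d : ℝ)| ≤
      γS * gS * ((gagliardoSq d s (fun z => u z - v z)).toReal ^ ((1:ℝ)/2)) *
        ((gagliardoSq d s w).toReal ^ ((1:ℝ)/2)) := by
  obtain rfl : h = fun x y t ↦ g x y |t| * t := by
    funext x y t
    rcases eq_or_ne t 0 with rfl | ht
    · rw [hh0, mul_zero]
    · exact hh x y t ht
  have hmeas : Measurable fun p : Ed d × Ed d × ℝ ↦ g p.1 p.2.1 |p.2.2| * p.2.2 :=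
    (hgmeas.comp (f := fun p : Ed d × Ed d × ℝ ↦ (p.1, p.2.1, |p.2.2|)) (by fun_prop)).mul
      (by fun_prop)
  exact integrable_pairingIntegrand_and_abs_integral_le (h := fun x y t ↦ g x y |t| * t) hmeas
    (hgae.mono fun _ hp ↦ lipschitzWith_comp_abs_mul hp) hu hv hw hfin1 hfin2

/-- Lipschitz continuity in the Hilbertian case `0 < γ_* ≤ g ≤ γ^*`: if
`[u - v]_{s,2} < ∞` and `[w]_{s,2} < ∞`, then the integrand of
`⟨𝓛_g^s u - 𝓛_g^s v, w⟩` is integrable on `ℝ^d × ℝ^d` and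
`|⟨𝓛_g^s u - 𝓛_g^s v, w⟩| ≤ γ^* g^* [u - v]_{s,2} [w]_{s,2}`. -/
theorem lipschitz_hilbertian
    (d : ℕ) (hd : 1 ≤ d) (s : ℝ) (hs0 : 0 < s) (hs1 : s < 1)
    (gs gS γs γS : ℝ) (hgs : 0 < gs) (hgsS : gs ≤ gS) (hγs : 0 < γs) (hγsS : γs ≤ γS)
    (g g' : Ed d → Ed d → ℝ → ℝ)
    (hgmeas : Measurable (fun p : Ed d × Ed d × ℝ => g p.1 p.2.1 p.2.2))
    (hgae : ∀ᵐ p : Ed d × Ed d, ∀ r : ℝ, 0 < r →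
      HasDerivAt (g p.1 p.2) (g' p.1 p.2 r) r ∧
      gs ≤ 1 + r * g' p.1 p.2 r / g p.1 p.2 r ∧
      1 + r * g' p.1 p.2 r / g p.1 p.2 r ≤ gS ∧
      γs ≤ g p.1 p.2 r ∧ g p.1 p.2 r ≤ γS)
    (h : Ed d → Ed d → ℝ → ℝ)
    (hh : ∀ (x y : Ed d) (t : ℝ), t ≠ 0 → h x y t = g x y |t| * t)
    (hh0 : ∀ x y : Ed d, h x y 0 = 0)
    (u v w : Ed d → ℝ) (hu : Measurable u) (hv : Measurable v) (hw : Measurable w)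
    (hfin1 : gagliardoSq d s (fun z => u z - v z) ≠ ⊤)
    (hfin2 : gagliardoSq d s w ≠ ⊤) :
    Integrable (fun p : Ed d × Ed d =>
      (h p.1 p.2 (deltaS s u p.1 p.2) - h p.1 p.2 (deltaS s v p.1 p.2)) *
        deltaS s w p.1 p.2 / ‖p.1 - p.2‖ ^ (d : ℝ)) volume ∧
    |∫ p : Ed d × Ed d,
        (h p.1 p.2 (deltaS s u p.1 p.2) - h p.1 p.2 (deltaS s v p.1 p.2)) *
          deltaS s w p.1 p.2 / ‖p.1 - p.2‖ ^ (d : ℝ)| ≤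
      γS * gS * ((gagliardoSq d s (fun z => u z - v z)).toReal ^ ((1:ℝ)/2)) *
        ((gagliardoSq d s w).toReal ^ ((1:ℝ)/2)) := by
  lift gS to ℝ≥0 using (hgs.trans_le hgsS).le
  lift γS to ℝ≥0 using (hγs.trans_le hγsS).le
  refine lipschitz_hilbertian_general (g' := g') hgmeas (hgae.mono fun p hp r hr ↦ ?_) hh hh0
    hu.aemeasurable hv.aemeasurable hw.aemeasurable hfin1 hfin2
  obtain ⟨hderiv, hge, hle, hpos, hbd⟩ := hp r hr
  exact ⟨hderiv, abs_le.2 ⟨by linarith, hle⟩, hγs.trans_le hpos, hbd⟩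
end

section
/- Let d ≥ 1, 0 < s < 1, p ≥ 2, and let K : ℝ^d × ℝ^d → ℝ be measurable with 0 < k_* ≤ K(x,y) ≤ k^* for a.e. (x,y). Then for all measurable u, v : ℝ^d → ℝ the integrand (x,y) ↦ K(x,y) ( |δ^s u|^{p−2} δ^s u − |δ^s v|^{p−2} δ^s v ) (δ^s u − δ^s v) |x−y|^{−d} is nonnegative a.e., and, as (possibly infinite) integrals of nonnegative functions, ∫_{ℝ^d}∫_{ℝ^d} K(x,y) ( |δ^s u|^{p−2} δ^s u − |δ^s v|^{p−2} δ^s v ) (δ^s u − δ^s v) |x−y|^{−d} dx dy ≥ 2^{1−p} k_* ∫_{ℝ^d}∫_{ℝ^d} |(u−v)(x) − (u−v)(y)|^p / |x−y|^{d+sp} dx dy. -/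
open MeasureTheory

/-!
For vectors `a`, `b` of a real inner product space and real `α`, `β`,
`⟪α a - β b, a - b⟫ = (α + β)/2 ‖a - b‖² + (α - β)/2 (‖a‖² - ‖b‖²)`.
With `α = ‖a‖^(p-2)` and `β = ‖b‖^(p-2)` the last term is nonnegative by monotonicity, while
`‖a - b‖^(p-2) ≤ 2^(p-2) (α + β)` turns the first one into `2^(1-p) ‖a - b‖^p`. The coercivity
estimate is this inequality for the difference quotients of `u` and `v`, integrated against the
kernel.
-/

section PowerFlux

open RealInnerProductSpace

/-- The power-law flux `a ↦ ‖a‖^(p-2) a` of the `p`-Laplacian; in an inner product space it is the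
gradient of `‖a‖^p / p` when `1 < p`. -/
noncomputable def powerFlux {V : Type*} [NormedAddCommGroup V] [NormedSpace ℝ V] (p : ℝ) (a : V) :
    V :=
  ‖a‖ ^ (p - 2) • a

theorem norm_sub_rpow_le_two_rpow_mul {V : Type*} [SeminormedAddCommGroup V] {q : ℝ} (hq : 0 ≤ q)
    (a b : V) : ‖a - b‖ ^ q ≤ 2 ^ q * (‖a‖ ^ q + ‖b‖ ^ q) := by
  wlog hab : ‖b‖ ≤ ‖a‖ generalizing a b
  · rw [norm_sub_rev, add_comm]
    exact this b a (le_of_not_ge hab)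
  calc ‖a - b‖ ^ q ≤ (2 * ‖a‖) ^ q := by
        gcongr
        linarith [norm_sub_le a b]
    _ = 2 ^ q * ‖a‖ ^ q := Real.mul_rpow zero_le_two (norm_nonneg a)
    _ ≤ 2 ^ q * (‖a‖ ^ q + ‖b‖ ^ q) := by
        gcongr
        exact le_add_of_nonneg_right (by positivity)

theorem rpow_sub_rpow_mul_sq_sub_sq_nonneg {x y q : ℝ} (hx : 0 ≤ x) (hy : 0 ≤ y) (hq : 0 ≤ q) :
    0 ≤ (x ^ q - y ^ q) * (x ^ 2 - y ^ 2) := by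
  rcases le_total x y with hxy | hyx
  · exact mul_nonneg_of_nonpos_of_nonpos (sub_nonpos.2 (by gcongr)) (sub_nonpos.2 (by gcongr))
  · exact mul_nonneg (sub_nonneg.2 (by gcongr)) (sub_nonneg.2 (by gcongr))

variable {V : Type*} [NormedAddCommGroup V] [InnerProductSpace ℝ V]

theorem inner_smul_sub_smul_sub (α β : ℝ) (a b : V) :
    ⟪α • a - β • b, a - b⟫ =
      (α + β) / 2 * ‖a - b‖ ^ 2 + (α - β) / 2 * (‖a‖ ^ 2 - ‖b‖ ^ 2) := by
  simp only [norm_sub_sq_real, inner_sub_left, inner_sub_right, real_inner_smul_left,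
    real_inner_self_eq_norm_sq, real_inner_comm a b]
  ring

theorem two_rpow_mul_norm_sub_rpow_le_inner_powerFlux {p : ℝ} (hp : 2 ≤ p) (a b : V) :
    2 ^ (1 - p) * ‖a - b‖ ^ p ≤ ⟪powerFlux p a - powerFlux p b, a - b⟫ := by
  have hq : 0 ≤ p - 2 := sub_nonneg.2 hp
  have norm_split : ‖a - b‖ ^ p = ‖a - b‖ ^ (p - 2) * ‖a - b‖ ^ 2 := by
    rw [← Real.rpow_add_natCast' (norm_nonneg _) (by push_cast; linarith), Nat.cast_ofNat,
      sub_add_cancel]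
  have two_pow : (2 : ℝ) ^ (1 - p) * 2 ^ (p - 2) = 1 / 2 := by
    rw [← Real.rpow_add two_pos, show 1 - p + (p - 2) = -1 by ring, Real.rpow_neg_one, one_div]
  have cross_nonneg :=
    rpow_sub_rpow_mul_sq_sub_sq_nonneg (norm_nonneg a) (norm_nonneg b) hq
  calc 2 ^ (1 - p) * ‖a - b‖ ^ p
      = 2 ^ (1 - p) * ‖a - b‖ ^ (p - 2) * ‖a - b‖ ^ 2 := by rw [norm_split, mul_assoc]
    _ ≤ 2 ^ (1 - p) * (2 ^ (p - 2) * (‖a‖ ^ (p - 2) + ‖b‖ ^ (p - 2))) * ‖a - b‖ ^ 2 := by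
        gcongr
        exact norm_sub_rpow_le_two_rpow_mul hq a b
    _ = (‖a‖ ^ (p - 2) + ‖b‖ ^ (p - 2)) / 2 * ‖a - b‖ ^ 2 := by
        rw [← mul_assoc, two_pow]
        ring
    _ ≤ ⟪powerFlux p a - powerFlux p b, a - b⟫ := by
        rw [powerFlux, powerFlux, inner_smul_sub_smul_sub]
        linarith

end PowerFlux

section FractionalDensities

open RealInnerProductSpace

variable {X V : Type*} [MetricSpace X] [NormedAddCommGroup V]

/-- The fractional difference quotient `(u x - u y) / dist x y ^ s` of a vector-valued function on
a metric space; `deltaS` is the case of real functions on `ℝ^d`. It vanishes on the diagonal. -/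
noncomputable def fracDiffQuot [NormedSpace ℝ V] (s : ℝ) (u : X → V) (x y : X) : V :=
  (dist x y ^ s)⁻¹ • (u x - u y)

/-- The integrand of the `p`-th power of the Gagliardo seminorm of order `s`. The real parameter
`n` plays the role of the dimension. -/
noncomputable def gagliardoDensity (n s p : ℝ) (w : X → V) (x y : X) : ℝ :=
  ‖w x - w y‖ ^ p / dist x y ^ (n + s * p)

/-- The integrand of the pairing `⟨𝓛 u - 𝓛 v, u - v⟩`, where `𝓛` is the fractional `p`-Laplacian of
order `s` with kernel `K`. The real parameter `n` plays the role of the dimension. -/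
noncomputable def pLaplacianPairingDensity [InnerProductSpace ℝ V] (n s p : ℝ) (K : X → X → ℝ)
    (u v : X → V) (x y : X) : ℝ :=
  K x y * ⟪powerFlux p (fracDiffQuot s u x y) - powerFlux p (fracDiffQuot s v x y),
    fracDiffQuot s u x y - fracDiffQuot s v x y⟫ / dist x y ^ n

theorem gagliardoDensity_nonneg (n s p : ℝ) (w : X → V) (x y : X) :
    0 ≤ gagliardoDensity n s p w x y := by
  unfold gagliardoDensity
  positivity

theorem fracDiffQuot_sub [NormedSpace ℝ V] (s : ℝ) (u v : X → V) (x y : X) :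
    fracDiffQuot s (u - v) x y = fracDiffQuot s u x y - fracDiffQuot s v x y := by
  simp only [fracDiffQuot, Pi.sub_apply, ← smul_sub, sub_sub_sub_comm]

theorem norm_fracDiffQuot_rpow_div [NormedSpace ℝ V] (n s : ℝ) {p : ℝ} (hp : p ≠ 0) (w : X → V)
    (x y : X) :
    ‖fracDiffQuot s w x y‖ ^ p / dist x y ^ n = gagliardoDensity n s p w x y := by
  rcases eq_or_ne x y with rfl | hxy
  · simp [fracDiffQuot, gagliardoDensity, Real.zero_rpow hp]
  · have hr : 0 < dist x y := dist_pos.2 hxy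
    have norm_eq : ‖fracDiffQuot s w x y‖ = ‖w x - w y‖ / dist x y ^ s := by
      rw [fracDiffQuot, norm_smul, norm_inv, Real.norm_of_nonneg (by positivity), inv_mul_eq_div]
    rw [norm_eq, Real.div_rpow (norm_nonneg _) (by positivity), ← Real.rpow_mul hr.le, div_div,
      ← Real.rpow_add hr, add_comm (s * p), gagliardoDensity]

theorem mul_gagliardoDensity_sub_le_pLaplacianPairingDensity [InnerProductSpace ℝ V] (n s : ℝ)
    {p k : ℝ} (hp : 2 ≤ p) (hk : 0 ≤ k) {K : X → X → ℝ} {x y : X} (hK : k ≤ K x y) (u v : X → V) :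
    2 ^ (1 - p) * k * gagliardoDensity n s p (u - v) x y ≤
      pLaplacianPairingDensity n s p K u v x y := by
  rw [← norm_fracDiffQuot_rpow_div n s (by positivity), fracDiffQuot_sub, pLaplacianPairingDensity,
    ← mul_div_assoc, mul_comm (2 ^ (1 - p)) k, mul_assoc]
  gcongr
  · exact hk.trans hK
  · exact two_rpow_mul_norm_sub_rpow_le_inner_powerFlux hp _ _

end FractionalDensities

section Euclidean

variable {d : ℕ} (s p : ℝ)

theorem fracDiffQuot_eq_deltaS (u : Ed d → ℝ) (x y : Ed d) :
    fracDiffQuot s u x y = deltaS s u x y := by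
  rw [fracDiffQuot, deltaS, dist_eq_norm, smul_eq_mul, inv_mul_eq_div]

theorem pLaplacianPairingDensity_eq_deltaS (n : ℝ) (K : Ed d → Ed d → ℝ) (u v : Ed d → ℝ)
    (x y : Ed d) :
    pLaplacianPairingDensity n s p K u v x y =
      K x y * ((|deltaS s u x y| ^ (p - 2) * deltaS s u x y -
        |deltaS s v x y| ^ (p - 2) * deltaS s v x y) * (deltaS s u x y - deltaS s v x y)) /
        ‖x - y‖ ^ n := by
  simp only [pLaplacianPairingDensity, powerFlux, fracDiffQuot_eq_deltaS, Real.inner_apply,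
    Real.norm_eq_abs, smul_eq_mul, dist_eq_norm]

theorem gagliardoDensity_sub_eq (n : ℝ) (u v : Ed d → ℝ) (x y : Ed d) :
    gagliardoDensity n s p (u - v) x y =
      |(u x - v x) - (u y - v y)| ^ p / ‖x - y‖ ^ (n + s * p) := by
  rw [gagliardoDensity, Real.norm_eq_abs, dist_eq_norm, Pi.sub_apply, Pi.sub_apply]

end Euclidean

theorem pLaplacian_coercivity_degenerate_general {X V : Type*} [MetricSpace X] [MeasurableSpace X]
    [NormedAddCommGroup V] [InnerProductSpace ℝ V] (μ : Measure (X × X)) (n s : ℝ) {p k : ℝ}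
    (hp : 2 ≤ p) (hk : 0 ≤ k) {K : X → X → ℝ} (hK : ∀ᵐ q ∂μ, k ≤ K q.1 q.2) (u v : X → V) :
    (∀ᵐ q ∂μ, 0 ≤ pLaplacianPairingDensity n s p K u v q.1 q.2) ∧
    ENNReal.ofReal (2 ^ (1 - p) * k) *
      (∫⁻ q, ENNReal.ofReal (gagliardoDensity n s p (u - v) q.1 q.2) ∂μ) ≤
      ∫⁻ q, ENNReal.ofReal (pLaplacianPairingDensity n s p K u v q.1 q.2) ∂μ := by
  have pointwise_le : ∀ᵐ q ∂μ, 2 ^ (1 - p) * k * gagliardoDensity n s p (u - v) q.1 q.2 ≤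
      pLaplacianPairingDensity n s p K u v q.1 q.2 := by
    filter_upwards [hK] with q hq
    exact mul_gagliardoDensity_sub_le_pLaplacianPairingDensity n s hp hk hq u v
  constructor
  · filter_upwards [pointwise_le] with q hq
    exact (mul_nonneg (by positivity) (gagliardoDensity_nonneg n s p _ _ _)).trans hq
  · rw [← lintegral_const_mul' _ _ ENNReal.ofReal_ne_top]
    refine lintegral_mono_ae ?_
    filter_upwards [pointwise_le] with q hq
    rw [← ENNReal.ofReal_mul (by positivity)]
    exact ENNReal.ofReal_le_ofReal hq

/-- Coercivity of the anisotropic fractional p-Laplacian for `p ≥ 2`: the integrand of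
`⟨𝓛_p^s u - 𝓛_p^s v, u - v⟩` is a.e. nonnegative and
`⟨𝓛_p^s u - 𝓛_p^s v, u - v⟩ ≥ 2^{1-p} k_* [u - v]^p_{s,p}`
as integrals of nonnegative functions. -/
theorem pLaplacian_coercivity_degenerate
    (d : ℕ) (hd : 1 ≤ d) (s : ℝ) (hs0 : 0 < s) (hs1 : s < 1)
    (p : ℝ) (hp : 2 ≤ p) (ks kS : ℝ) (hks : 0 < ks) (hksS : ks ≤ kS)
    (K : Ed d → Ed d → ℝ)
    (hKmeas : Measurable (fun q : Ed d × Ed d => K q.1 q.2))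
    (hKbdd : ∀ᵐ q : Ed d × Ed d, ks ≤ K q.1 q.2 ∧ K q.1 q.2 ≤ kS)
    (u v : Ed d → ℝ) (hu : Measurable u) (hv : Measurable v) :
    (∀ᵐ q : Ed d × Ed d,
      0 ≤ K q.1 q.2 *
        ((|deltaS s u q.1 q.2| ^ (p - 2) * deltaS s u q.1 q.2 -
          |deltaS s v q.1 q.2| ^ (p - 2) * deltaS s v q.1 q.2) *
          (deltaS s u q.1 q.2 - deltaS s v q.1 q.2)) / ‖q.1 - q.2‖ ^ (d : ℝ)) ∧
    ENNReal.ofReal ((2 : ℝ) ^ (1 - p) * ks) *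
      (∫⁻ q : Ed d × Ed d,
        ENNReal.ofReal (|(u q.1 - v q.1) - (u q.2 - v q.2)| ^ p /
          ‖q.1 - q.2‖ ^ ((d : ℝ) + s * p))) ≤
      ∫⁻ q : Ed d × Ed d,
        ENNReal.ofReal (K q.1 q.2 *
          ((|deltaS s u q.1 q.2| ^ (p - 2) * deltaS s u q.1 q.2 -
            |deltaS s v q.1 q.2| ^ (p - 2) * deltaS s v q.1 q.2) *
            (deltaS s u q.1 q.2 - deltaS s v q.1 q.2)) / ‖q.1 - q.2‖ ^ (d : ℝ)) := by
  simpa only [pLaplacianPairingDensity_eq_deltaS, gagliardoDensity_sub_eq] using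
    pLaplacian_coercivity_degenerate_general volume d s hp hks.le
      (hKbdd.mono fun _ hq ↦ hq.1) u v
end
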